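/- arXiv:1311.7167 — 2 statements merged into one kernel-verified Lean document; each statement's English description precedes it below -/
import Mathlib

section
/- Let r and t be positive integers with r not divisible by 3. Then the congruence lattices 𝓛 = 𝓛(r²t; 1, 1+rt, 1+3rt) and 𝓛' = 𝓛(r²t; 1, 1−rt, 1−3rt) in ℤ³ are ‖·‖₁*-isospectral; that is, for every k ∈ ℕ and every z with 0 ≤ z ≤ 3, N_𝓛(k,z) = N_{𝓛'}(k,z). -/
/-- The congruence lattice `𝓛(q; s₁, …, s_m) = {a ∈ ℤ^m : ∑ aⱼsⱼ ≡ 0 (mod q)}`. -/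
def congLat (q m : ℕ) (s : Fin m → ℤ) : Set (Fin m → ℤ) :=
  {a | (q : ℤ) ∣ ∑ j, a j * s j}

/-- `N_𝓛(k, z)`: the number of `μ ∈ 𝓛` with `‖μ‖₁ = k` and exactly `z` zero coordinates. -/
noncomputable def NL (q m : ℕ) (s : Fin m → ℤ) (k z : ℕ) : ℕ :=
  Nat.card {a : Fin m → ℤ // a ∈ congLat q m s ∧ (∑ j, (a j).natAbs) = k ∧
    (Finset.univ.filter fun j => a j = 0).card = z}

/-!
Put `T = rt`. Reducing `∑ aⱼ(1 + cⱼT) ≡ 0 (mod rT)` first modulo `T` shows that `a` lies in the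
lattice of `c` iff `∑ aⱼ = Th` for some `h` with `h + ∑ cⱼaⱼ ≡ 0 (mod r)`. Since `3` is invertible
modulo `r`, all differences of entries of `c = (0, 1, 3)` divide `2` modulo `r`. For such `c` the
lattices of `c` and `-c` have equally many points of each one-norm in every orthant separately; up
to permutations of the coordinates and `a ↦ -a` there are three cases.

* If some coordinate is zero, swap the other two: as `r ∣ T`, adding a constant to `c` changes
  nothing, so the swap of two entries can be matched with a change of sign.
* In the positive orthant `h` is fixed by the norm, and the points correspond to those of a triangle
  of side `Th` at which a linear form is `-h` modulo `r`; for `-c` the value is `h` instead. Both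
  values are taken equally often.
* In the orthant `x, y > 0 > w` there is a bijection: a reflection on the part `y < -w`, and a
  cyclic rotation of segments `x + y = const` on the part `y ≥ -w`.
-/

open Finset

section TriangleCount

variable {r : ℕ}

theorem sum_range_mul_zmod_natCast [NeZero r] {M : Type*} [AddCommMonoid M] (m : ℕ)
    (f : ZMod r → M) : ∑ j ∈ range (r * m), f j = m • ∑ x, f x := by
  obtain ⟨r, rfl⟩ := Nat.exists_eq_succ_of_ne_zero (NeZero.ne r)
  have sum_period : ∑ j ∈ range (r + 1), f j = ∑ x, f x := by
    rw [← Fin.sum_univ_eq_sum_range fun j => f j]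
    exact sum_congr rfl fun x _ => congrArg f (Fin.cast_val_eq_self x)
  induction m with
  | zero => simp
  | succ m ih => simp [Nat.mul_succ, sum_range_add, ih, sum_period, succ_nsmul]

/-- The number of solutions `x` of `a * x = v` in `ZMod r`. -/
def solutionCount [NeZero r] (a v : ZMod r) : ℕ := #{x | a * x = v}

theorem solutionCount_neg [NeZero r] (a v : ZMod r) :
    solutionCount a (-v) = solutionCount a v := by
  refine card_equiv (Equiv.neg _) fun x => ?_
  simp [eq_neg_iff_add_eq_zero, neg_eq_iff_add_eq_zero]

theorem solutionCount_periodic [NeZero r] {a b : ZMod r} (hab : a ∣ b) :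
    Function.Periodic (solutionCount a) b := by
  obtain ⟨e, rfl⟩ := hab
  refine fun v => card_equiv (Equiv.subRight e) fun x => ?_
  simp [mul_sub, sub_eq_iff_eq_add]

theorem sum_range_mul_ite_mul_natCast_eq [NeZero r] (m : ℕ) (a v : ZMod r) :
    ∑ w ∈ range (r * m), (if a * w = v then (1 : ℤ) else 0) = m * solutionCount a v := by
  rw [sum_range_mul_zmod_natCast m fun x => if a * x = v then (1 : ℤ) else 0]
  simp [solutionCount]

/-- The number of lattice points `(y, w)` in the open triangle `0 < y`, `0 < w`, `y + w < n` at
which the linear form `d * y + g * w` takes the value `v` modulo `r`. -/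
def triangleCount (n : ℕ) (d g v : ZMod r) : ℤ :=
  ∑ w ∈ Ico 1 n, ∑ y ∈ Ico 1 (n - w), if d * y + g * w = v then 1 else 0

theorem triangleCount_neg_neg_neg (n : ℕ) (d g v : ZMod r) :
    triangleCount n (-d) (-g) (-v) = triangleCount n d g v := by
  simp only [triangleCount, neg_mul, ← neg_add, neg_inj]

-- Shifting `v` by `d` amounts to shifting `y` by one, so the sums over `y` telescope.
theorem triangleCount_add_sub_eq_sum {n : ℕ} (hn : (n : ZMod r) = 0) (d g v : ZMod r) :
    triangleCount n d g (v + d) - triangleCount n d g v =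
      ∑ w ∈ Ico 1 n, ((if g * w = v then 1 else 0) - if (g - d) * w = v + d then 1 else 0) := by
  rw [triangleCount, triangleCount, ← sum_sub_distrib]
  refine sum_congr rfl fun w hw => ?_
  have hwn : w < n := (mem_Ico.1 hw).2
  have hcast : ((n - w : ℕ) : ZMod r) = -w := by rw [Nat.cast_sub hwn.le, hn, zero_sub]
  have shift (y : ℕ) : d * y + g * w = v ↔ d * (y + 1 : ℕ) + g * w = v + d := by
    rw [← add_left_inj d]
    push_cast
    ring_nf
  have first : d * (1 : ℕ) + g * w = v + d ↔ g * w = v := by simp [add_comm d]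
  have last : d * -w + g * w = (g - d) * w := by ring
  simp only [shift]
  have telescope := sum_Ico_sub (fun y : ℕ => if d * y + g * w = v + d then (1 : ℤ) else 0)
    (Nat.one_le_iff_ne_zero.2 (Nat.sub_ne_zero_of_lt hwn))
  simp only [hcast, first, last, sum_sub_distrib] at telescope
  rw [← neg_sub, telescope, neg_sub]

theorem triangleCount_add_sub [NeZero r] {m : ℕ} (hm : m ≠ 0) (d g v : ZMod r) :
    triangleCount (r * m) d g (v + d) - triangleCount (r * m) d g v =
      m * (solutionCount g v - solutionCount (g - d) (v + d) : ℤ) +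
        ((if v + d = 0 then 1 else 0) - if v = 0 then 1 else 0) := by
  have hpos : 0 < r * m := Nat.pos_of_ne_zero (mul_ne_zero (NeZero.ne r) hm)
  have hsplit := sum_range_eq_add_Ico (fun w : ℕ =>
    (if g * w = v then (1 : ℤ) else 0) - if (g - d) * w = v + d then 1 else 0) hpos
  rw [sum_sub_distrib, sum_range_mul_ite_mul_natCast_eq, sum_range_mul_ite_mul_natCast_eq] at hsplit
  simp only [Nat.cast_zero, mul_zero, eq_comm (a := (0 : ZMod r))] at hsplit
  rw [triangleCount_add_sub_eq_sum (by simp)]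
  linear_combination -hsplit

theorem eq_zero_of_apply_add_eq_add_of_periodic [NeZero r] {E V : ZMod r → ℤ} {d : ZMod r}
    (hE : ∀ v, E (v + d) = E v + V v) (hV : Function.Periodic V d) : V = 0 := by
  funext v
  have iterate (k : ℕ) : E (v + k * d) = E v + k * V v := by
    induction k with
    | zero => simp
    | succ k ih =>
      push_cast
      rw [add_one_mul, ← add_assoc, hE, ih, hV.nat_mul k v]
      ring
  simpa [NeZero.ne r] using iterate r

theorem eq_zero_of_odd_of_periodic_two {E : ZMod r → ℤ} (hodd : Function.Odd E)
    (hper : Function.Periodic E 2) : E = 0 := by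
  funext v
  obtain ⟨k, rfl⟩ := ZMod.intCast_surjective v
  have : E (-k + k * 2) = E (-k) := hper.int_mul k _
  rw [mul_two, neg_add_cancel_left, hodd] at this
  exact self_eq_neg.1 this

-- The defect `E v = N v - N (-v)` grows along `d` by a function `V` that is itself invariant
-- under `d`; as `d` has finite order, `V` vanishes, and `E` is both odd and invariant under `2`.
theorem triangleCount_neg [NeZero r] (m : ℕ) {d g : ZMod r} (hd : d ∣ 2) (hg : g ∣ 2)
    (hgd : g - d ∣ 2) (v : ZMod r) :
    triangleCount (r * m) d g (-v) = triangleCount (r * m) d g v := by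
  obtain rfl | hm := eq_or_ne m 0
  · simp [triangleCount]
  let E : ZMod r → ℤ := fun v => triangleCount (r * m) d g v - triangleCount (r * m) d g (-v)
  let W : ZMod r → ℤ := fun v => solutionCount g v - solutionCount (g - d) v
  let V : ZMod r → ℤ := fun v => m * (W v + W (v + d))
  have hW : Function.Periodic W 2 := fun v => by
    simp only [W, solutionCount_periodic hg v, solutionCount_periodic hgd v]
  have hV : Function.Periodic V d := fun v => by
    have hWd : W (v + d + d) = W v := by
      simpa [add_assoc, mul_two] using hW.int_mul (d.cast : ℤ) v
    simp only [V, hWd, add_comm (W v)]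
  have hE (v : ZMod r) : E (v + d) = E v + V v := by
    have forward := triangleCount_add_sub hm d g v
    have backward := triangleCount_add_sub hm d g (-(v + d))
    rw [show -(v + d) + d = -v by ring, solutionCount_neg, solutionCount_neg] at backward
    simp only [neg_eq_zero] at backward
    simp only [E, V, W]
    linear_combination forward + backward
  have hE_periodic : Function.Periodic E d := fun v => by
    simp [hE, eq_zero_of_apply_add_eq_add_of_periodic hE hV]
  obtain ⟨e, he⟩ := hd
  have hE_two : Function.Periodic E 2 := by
    simpa [he, mul_comm d] using hE_periodic.int_mul (e.cast : ℤ)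
  have hE_zero := eq_zero_of_odd_of_periodic_two (fun v => by simp [E]) hE_two
  exact (sub_eq_zero.1 (congrFun hE_zero v)).symm

end TriangleCount

section SignPatterns

variable {m : ℕ}

/-- The points of `L ⊆ ℤ^m` of one-norm `k` whose coordinates have the signs prescribed by `σ`. -/
def orthantPoints (L : Set (Fin m → ℤ)) (k : ℕ) (σ : Fin m → SignType) : Set (Fin m → ℤ) :=
  {a | a ∈ L ∧ ∑ j, (a j).natAbs = k ∧ ∀ j, SignType.sign (a j) = σ j}

theorem finite_setOf_sum_natAbs_eq {ι : Type*} [Fintype ι] (k : ℕ) :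
    {a : ι → ℤ | ∑ j, (a j).natAbs = k}.Finite := by
  classical
  refine (Set.finite_Icc (fun _ => (-k : ℤ)) fun _ => (k : ℤ)).subset ?_
  rintro a rfl
  have hle (j : ι) : (a j).natAbs ≤ ∑ i, (a i).natAbs :=
    single_le_sum (f := fun i => (a i).natAbs) (fun _ _ => Nat.zero_le _) (mem_univ j)
  exact ⟨fun j => by grind, fun j => by grind⟩

theorem finite_orthantPoints (L : Set (Fin m → ℤ)) (k : ℕ) (σ : Fin m → SignType) :
    (orthantPoints L k σ).Finite :=
  (finite_setOf_sum_natAbs_eq k).subset fun _ ha => ha.2.1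

theorem NL_eq_sum_ncard_orthantPoints (q : ℕ) (s : Fin m → ℤ) (k z : ℕ) :
    NL q m s k z = ∑ σ : Fin m → SignType with #{j | σ j = 0} = z,
      (orthantPoints (congLat q m s) k σ).ncard := by
  classical
  have hfin : {a | a ∈ congLat q m s ∧ ∑ j, (a j).natAbs = k ∧ #{j | a j = 0} = z}.Finite :=
    (finite_setOf_sum_natAbs_eq k).subset fun _ ha => ha.2.1
  have hNL : NL q m s k z = #hfin.toFinset := Set.ncard_eq_toFinset_card _ hfin
  rw [hNL, card_eq_sum_card_fiberwise (f := fun a j => SignType.sign (a j))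
    (t := {σ : Fin m → SignType | #{j | σ j = 0} = z}) (fun a ha => by
      simpa using ((hfin.mem_toFinset).1 ha).2.2)]
  refine sum_congr rfl fun σ hσ => ?_
  rw [← Set.ncard_coe_finset]
  congr 1
  ext a
  simp only [coe_filter, Set.Finite.mem_toFinset, Set.mem_ofPred_eq, orthantPoints, funext_iff]
  constructor
  · rintro ⟨⟨ha, hk, -⟩, hsign⟩
    exact ⟨ha, hk, hsign⟩
  · rintro ⟨ha, hk, hsign⟩
    refine ⟨⟨ha, hk, ?_⟩, hsign⟩
    simpa [← hsign] using hσ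

theorem ncard_orthantPoints_neg {L : Set (Fin m → ℤ)} (hL : ∀ a, -a ∈ L ↔ a ∈ L) (k : ℕ)
    (σ : Fin m → SignType) : (orthantPoints L k (-σ)).ncard = (orthantPoints L k σ).ncard := by
  refine Nat.card_congr ((Equiv.neg (Fin m → ℤ)).subtypeEquiv fun a => ?_)
  simp [orthantPoints, hL, Left.sign_neg, neg_eq_iff_eq_neg]

theorem signPattern_induction {P : (Fin 3 → SignType) → Prop}
    (perm : ∀ (τ : Equiv.Perm (Fin 3)) σ, P (σ ∘ τ) → P σ) (neg : ∀ σ, P (-σ) → P σ)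
    (zero : ∀ σ, σ 2 = 0 → P σ) (pos : P 1) (mixed : P ![1, 1, -1]) (σ : Fin 3 → SignType) :
    P σ := by
  have representative : ∀ σ : Fin 3 → SignType, ∃ i, (σ ∘ Equiv.swap i 2) 2 = 0 ∨
      (∃ ρ, (ρ = σ ∘ Equiv.swap i 2 ∨ ρ = -(σ ∘ Equiv.swap i 2)) ∧ (ρ = 1 ∨ ρ = ![1, 1, -1])) := by
    decide
  obtain ⟨i, hzero | ⟨ρ, hρ, h⟩⟩ := representative σ
  · exact perm _ σ (zero _ hzero)
  · have hPρ : P ρ := by rcases h with rfl | rfl <;> assumption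
    rcases hρ with rfl | rfl
    · exact perm _ σ hPρ
    · exact perm _ σ (neg _ hPρ)

end SignPatterns

section PerturbedLattice

variable {m r T k : ℕ}

/-- The congruence lattice `𝓛(rT; 1 + c₁T, …, 1 + c_mT)`. -/
def perturbedLat (r T : ℕ) (c : Fin m → ℤ) : Set (Fin m → ℤ) :=
  congLat (r * T) m fun j => 1 + c j * T

theorem mem_perturbedLat_iff {c a : Fin m → ℤ} :
    a ∈ perturbedLat r T c ↔ ∃ h : ℤ, ∑ j, a j = T * h ∧ (r : ℤ) ∣ h + ∑ j, c j * a j := by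
  have hsum : ∑ j, a j * (1 + c j * T) = ∑ j, a j + T * ∑ j, c j * a j := by
    rw [mul_sum, ← sum_add_distrib]
    exact sum_congr rfl fun j _ => by ring
  rw [perturbedLat, congLat, Set.mem_ofPred_eq, hsum]
  push_cast
  constructor
  · rintro ⟨l, hl⟩
    exact ⟨r * l - ∑ j, c j * a j, by linear_combination hl, l, by ring⟩
  · rintro ⟨h, hT, l, hl⟩
    exact ⟨l, by linear_combination hT + T * hl⟩

theorem neg_mem_perturbedLat_iff {c a : Fin m → ℤ} :
    -a ∈ perturbedLat r T c ↔ a ∈ perturbedLat r T c := by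
  simp [perturbedLat, congLat]

theorem comp_perm_mem_perturbedLat_iff {c a : Fin m → ℤ} (τ : Equiv.Perm (Fin m)) :
    a ∘ τ ∈ perturbedLat r T (c ∘ τ) ↔ a ∈ perturbedLat r T c := by
  simp only [perturbedLat, congLat, Set.mem_ofPred_eq, Function.comp_apply]
  rw [Equiv.sum_comp τ fun j => a j * (1 + c j * T)]

theorem ncard_orthantPoints_perturbedLat_comp_perm (c : Fin m → ℤ) (σ : Fin m → SignType)
    (τ : Equiv.Perm (Fin m)) :
    (orthantPoints (perturbedLat r T (c ∘ τ)) k (σ ∘ τ)).ncard =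
      (orthantPoints (perturbedLat r T c) k σ).ncard := by
  refine (Nat.card_congr ((τ.symm.arrowCongr (Equiv.refl ℤ)).subtypeEquiv fun a => ?_)).symm
  change _ ↔ a ∘ τ ∈ orthantPoints _ _ _
  simp only [orthantPoints, Set.mem_ofPred_eq, comp_perm_mem_perturbedLat_iff, Function.comp_apply]
  rw [Equiv.sum_comp τ fun j => (a j).natAbs,
    τ.forall_congr_right (q := fun j => SignType.sign (a j) = σ j)]

theorem mem_perturbedLat_congr {c c' a a' : Fin m → ℤ} (hrT : r ∣ T) {δ : ℤ}
    (hsum : ∑ j, a' j = ∑ j, a j) (hδ : ∑ j, c' j * a' j = ∑ j, c j * a j + δ * ∑ j, a j) :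
    a' ∈ perturbedLat r T c' ↔ a ∈ perturbedLat r T c := by
  simp only [mem_perturbedLat_iff, hsum]
  refine exists_congr fun h => and_congr_right fun hT => ?_
  have hdvd : (r : ℤ) ∣ δ * ∑ j, a j :=
    hT ▸ ((Int.natCast_dvd_natCast.2 hrT).mul_right h).mul_left δ
  rw [hδ, ← add_assoc, dvd_add_left hdvd]

theorem orthantPoints_perturbedLat_neg_of_forall_ne {c : Fin m → ℤ} {σ : Fin m → SignType}
    (hrT : r ∣ T) (i : Fin m) (hσ : ∀ j, j ≠ i → σ j = 0) :
    orthantPoints (perturbedLat r T (-c)) k σ = orthantPoints (perturbedLat r T c) k σ := by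
  ext a
  refine and_congr_left fun ⟨_, hsign⟩ => mem_perturbedLat_congr hrT (δ := -2 * c i) rfl ?_
  have ha (j : Fin m) (hj : j ≠ i) : a j = 0 := sign_eq_zero_iff.1 ((hsign j).trans (hσ j hj))
  rw [Fintype.sum_eq_single i fun j hj => by simp [ha j hj],
    Fintype.sum_eq_single i fun j hj => by simp [ha j hj], Fintype.sum_eq_single i ha, Pi.neg_apply]
  ring

theorem ncard_orthantPoints_perturbedLat_neg_comp_swap (c : Fin 3 → ℤ) {σ : Fin 3 → SignType}
    (hrT : r ∣ T) (hσ : σ 2 = 0) :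
    (orthantPoints (perturbedLat r T (-c)) k (σ ∘ Equiv.swap 0 1)).ncard =
      (orthantPoints (perturbedLat r T c) k σ).ncard := by
  have hset : orthantPoints (perturbedLat r T (-c ∘ Equiv.swap 0 1)) k σ =
      orthantPoints (perturbedLat r T c) k σ := by
    ext a
    refine and_congr_left fun ⟨_, hsign⟩ => mem_perturbedLat_congr hrT (δ := -(c 0 + c 1)) rfl ?_
    have ha : a 2 = 0 := sign_eq_zero_iff.1 ((hsign 2).trans hσ)
    simp only [Fin.sum_univ_three, ha, Function.comp_apply, Pi.neg_apply, Equiv.swap_apply_left,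
      Equiv.swap_apply_right]
    ring
  rw [← hset, ← ncard_orthantPoints_perturbedLat_comp_perm _ σ (Equiv.swap 0 1)]
  congr 3
  ext j
  simp

theorem ncard_orthantPoints_perturbedLat_neg_of_apply_two_eq_zero (c : Fin 3 → ℤ)
    {σ : Fin 3 → SignType} (hrT : r ∣ T) (hσ : σ 2 = 0) :
    (orthantPoints (perturbedLat r T (-c)) k σ).ncard =
      (orthantPoints (perturbedLat r T c) k σ).ncard := by
  have cases_signs : ∀ σ : Fin 3 → SignType, σ 2 = 0 → σ ∘ Equiv.swap 0 1 = σ ∨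
      σ ∘ Equiv.swap 0 1 = -σ ∨ ∃ i, ∀ j, j ≠ i → σ j = 0 := by decide
  have hswap := ncard_orthantPoints_perturbedLat_neg_comp_swap (k := k) c hrT hσ
  obtain h | h | ⟨i, hi⟩ := cases_signs σ hσ
  · rwa [h] at hswap
  · rwa [h, ncard_orthantPoints_neg fun _ => neg_mem_perturbedLat_iff] at hswap
  · rw [orthantPoints_perturbedLat_neg_of_forall_ne hrT i hi]

theorem sum_eq_of_mem_orthantPoints_one {L : Set (Fin m → ℤ)} {a : Fin m → ℤ}
    (ha : a ∈ orthantPoints L k 1) : ∑ j, a j = k := by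
  obtain ⟨-, rfl, hsign⟩ := ha
  push_cast
  exact sum_congr rfl fun j _ => (abs_of_pos (sign_eq_one_iff.1 (hsign j))).symm

theorem dvd_of_mem_orthantPoints_perturbedLat_one {c a : Fin m → ℤ}
    (ha : a ∈ orthantPoints (perturbedLat r T c) k 1) : T ∣ k := by
  obtain ⟨h, hT, -⟩ := mem_perturbedLat_iff.1 ha.1
  exact Int.natCast_dvd_natCast.1 ⟨h, (sum_eq_of_mem_orthantPoints_one ha).symm.trans hT⟩

theorem dvd_add_sum_mul_iff {c a : Fin 3 → ℤ} (hr : (r : ℤ) ∣ ∑ j, a j) (h : ℤ) :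
    (r : ℤ) ∣ h + ∑ j, c j * a j ↔
      ((c 1 - c 0 : ℤ) * a 1 + (c 2 - c 0 : ℤ) * a 2 : ZMod r) = -h := by
  have hreduce : h + ∑ j, c j * a j =
      (c 1 - c 0) * a 1 + (c 2 - c 0) * a 2 + h + c 0 * ∑ j, a j := by
    simp only [Fin.sum_univ_three]
    ring
  rw [hreduce, dvd_add_left (hr.mul_left _), ← ZMod.intCast_zmod_eq_zero_iff_dvd,
    eq_neg_iff_add_eq_zero]
  push_cast
  rfl

theorem mem_orthantPoints_perturbedLat_one_iff {c a : Fin 3 → ℤ} {h : ℕ} (hT : T ≠ 0)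
    (hrT : r ∣ T) : a ∈ orthantPoints (perturbedLat r T c) (T * h) 1 ↔
      (∀ j, 0 < a j) ∧ ∑ j, a j = (T * h : ℕ) ∧
        ((c 1 - c 0 : ℤ) * a 1 + (c 2 - c 0 : ℤ) * a 2 : ZMod r) = -h := by
  have hdvd (hsum : ∑ j, a j = (T * h : ℕ)) : (r : ℤ) ∣ ∑ j, a j :=
    hsum ▸ Int.natCast_dvd_natCast.2 (hrT.mul_right h)
  constructor
  · intro ha
    have hsum := sum_eq_of_mem_orthantPoints_one ha
    obtain ⟨h', hT', hr⟩ := mem_perturbedLat_iff.1 ha.1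
    obtain rfl : h' = h := by
      rw [hsum, Nat.cast_mul] at hT'
      exact (mul_left_cancel₀ (Nat.cast_ne_zero.2 hT) hT').symm
    exact ⟨fun j => sign_eq_one_iff.1 (ha.2.2 j), hsum,
      by simpa using (dvd_add_sum_mul_iff (hdvd hsum) _).1 hr⟩
  · rintro ⟨hpos, hsum, hform⟩
    refine ⟨mem_perturbedLat_iff.2 ⟨h, by simpa using hsum,
      (dvd_add_sum_mul_iff (hdvd hsum) _).2 (by simpa using hform)⟩, ?_,
      fun j => sign_eq_one_iff.2 (hpos j)⟩
    zify
    simpa only [abs_of_pos (hpos _), Nat.cast_mul] using hsum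

theorem ncard_orthantPoints_perturbedLat_one (c : Fin 3 → ℤ) (h : ℕ) (hT : T ≠ 0) (hrT : r ∣ T) :
    ((orthantPoints (perturbedLat r T c) (T * h) 1).ncard : ℤ) =
      triangleCount (T * h) ((c 1 - c 0 : ℤ) : ZMod r) (c 2 - c 0 : ℤ) (-h) := by
  classical
  set n := T * h with hn
  let S : Finset (Σ _ : ℕ, ℕ) := {p ∈ (Ico 1 n).sigma fun w => Ico 1 (n - w) |
    ((c 1 - c 0 : ℤ) * p.2 + (c 2 - c 0 : ℤ) * p.1 : ZMod r) = -h}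
  let point : (Σ _ : ℕ, ℕ) → Fin 3 → ℤ := fun p => ![n - p.2 - p.1, p.2, p.1]
  have hpoint : Function.Injective point := by
    rintro ⟨w, y⟩ ⟨w', y'⟩ hp
    obtain rfl : y = y' := by simpa [point] using congrFun hp 1
    obtain rfl : w = w' := by simpa [point] using congrFun hp 2
    rfl
  have himage : orthantPoints (perturbedLat r T c) n 1 = point '' S := by
    ext a
    rw [hn, mem_orthantPoints_perturbedLat_one_iff hT hrT, ← hn]
    simp only [Fin.sum_univ_three, Set.mem_image, mem_coe, S, mem_filter, mem_sigma, mem_Ico]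
    constructor
    · rintro ⟨hpos, hsum, hform⟩
      obtain ⟨y, hy⟩ := Int.eq_ofNat_of_zero_le (hpos 1).le
      obtain ⟨w, hw⟩ := Int.eq_ofNat_of_zero_le (hpos 2).le
      have hx := hpos 0
      refine ⟨⟨w, y⟩, ⟨by grind, by simpa [hy, hw] using hform⟩, ?_⟩
      ext j
      fin_cases j
      · exact (by grind : (n : ℤ) - y - w = a 0)
      · exact hy.symm
      · exact hw.symm
    · rintro ⟨⟨w, y⟩, ⟨⟨hw, hy⟩, hform⟩, rfl⟩
      dsimp only at hw hy
      refine ⟨fun j => ?_, ?_, by simpa [point] using hform⟩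
      · fin_cases j
        · exact (by grind : (0 : ℤ) < n - y - w)
        · exact Int.natCast_pos.2 hy.1
        · exact Int.natCast_pos.2 hw.1
      · simp only [point, Matrix.cons_val]
        ring
  rw [himage, Set.ncard_image_of_injective _ hpoint, Set.ncard_coe_finset, card_filter, sum_sigma]
  simp [triangleCount]

theorem zmod_intCast_dvd_natCast_of_gcd_dvd {a : ℤ} {n : ℕ} (h : a.gcd r ∣ n) :
    (a : ZMod r) ∣ n := by
  obtain ⟨x, y, hxy⟩ := Int.gcd_dvd_iff.1 h
  exact ⟨x, by simpa using congrArg (Int.cast : ℤ → ZMod r) hxy⟩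

theorem ncard_orthantPoints_perturbedLat_neg_one (hT : T ≠ 0) (hrT : r ∣ T)
    {c : Fin 3 → ℤ} (hc : Pairwise fun i j => (c i - c j).gcd r ∣ 2) :
    (orthantPoints (perturbedLat r T (-c)) k 1).ncard =
      (orthantPoints (perturbedLat r T c) k 1).ncard := by
  have : NeZero r := ⟨ne_zero_of_dvd_ne_zero hT hrT⟩
  have hdvd (i j : Fin 3) (hij : i ≠ j) : ((c i - c j : ℤ) : ZMod r) ∣ 2 := by
    exact_mod_cast zmod_intCast_dvd_natCast_of_gcd_dvd (hc hij)
  by_cases hk : T ∣ k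
  · obtain ⟨h, rfl⟩ := hk
    rw [← Nat.cast_inj (R := ℤ), ncard_orthantPoints_perturbedLat_one _ h hT hrT,
      ncard_orthantPoints_perturbedLat_one _ h hT hrT]
    obtain ⟨m, rfl⟩ := hrT
    have hcast (i : Fin 3) : (((-c) i - (-c) 0 : ℤ) : ZMod r) = -((c i - c 0 : ℤ) : ZMod r) := by
      rw [← Int.cast_neg, neg_sub, Pi.neg_apply, Pi.neg_apply, neg_sub_neg]
    have hslope : ((c 2 - c 0 : ℤ) - (c 1 - c 0 : ℤ) : ZMod r) ∣ 2 := by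
      rw [← Int.cast_sub, sub_sub_sub_cancel_right]
      exact hdvd 2 1 (by decide)
    rw [hcast, hcast, triangleCount_neg_neg_neg, mul_assoc,
      triangleCount_neg _ (hdvd 1 0 (by decide)) (hdvd 2 0 (by decide)) hslope]
  · have hempty (c : Fin 3 → ℤ) : orthantPoints (perturbedLat r T c) k 1 = ∅ :=
      Set.eq_empty_of_forall_notMem fun a ha => hk (dvd_of_mem_orthantPoints_perturbedLat_one ha)
    rw [hempty, hempty]

theorem mem_orthantPoints_mixed_iff {L : Set (Fin 3 → ℤ)} {a : Fin 3 → ℤ} :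
    a ∈ orthantPoints L k ![1, 1, -1] ↔
      a ∈ L ∧ a 0 + a 1 - a 2 = k ∧ 0 < a 0 ∧ 0 < a 1 ∧ a 2 < 0 := by
  simp only [orthantPoints, Set.mem_ofPred_eq, Fin.sum_univ_three, Fin.forall_fin_succ]
  simp only [Matrix.cons_val_zero, Fin.succ_zero_eq_one, Matrix.cons_val_one, Fin.succ_one_eq_two,
    Matrix.cons_val, sign_eq_one_iff, sign_eq_neg_one_iff, IsEmpty.forall_iff]
  grind

/-- The involution `(x, y, w) ↦ (-y - w, y, -x - y)` of `ℤ³`, which keeps the one-norm of the points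
with `x, y > 0 > w` and `y < -w`. -/
def reflectMixed (a : Fin 3 → ℤ) : Fin 3 → ℤ := ![-(a 1 + a 2), a 1, -(a 0 + a 1)]

theorem reflectMixed_involutive : Function.Involutive reflectMixed := fun a => by
  ext j
  fin_cases j <;> simp [reflectMixed]

theorem reflectMixed_mem_perturbedLat_neg_iff {c a : Fin 3 → ℤ} (hrT : r ∣ T) :
    reflectMixed a ∈ perturbedLat r T (-c) ↔ a ∈ perturbedLat r T c := by
  rw [← neg_mem_perturbedLat_iff]
  refine mem_perturbedLat_congr hrT (δ := -(c 0 + c 2)) ?_ ?_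
  all_goals
    simp only [reflectMixed, Fin.sum_univ_three, Pi.neg_apply, Matrix.cons_val]
    ring

theorem ncard_orthantPoints_perturbedLat_neg_mixed_inter_lt (c : Fin 3 → ℤ) (hrT : r ∣ T) :
    (orthantPoints (perturbedLat r T (-c)) k ![1, 1, -1] ∩ {a | a 1 < -a 2}).ncard =
      (orthantPoints (perturbedLat r T c) k ![1, 1, -1] ∩ {a | a 1 < -a 2}).ncard := by
  refine (Nat.card_congr (reflectMixed_involutive.toPerm.subtypeEquiv fun a => ?_)).symm
  simp only [Set.mem_inter_iff, mem_orthantPoints_mixed_iff, Function.Involutive.coe_toPerm,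
    reflectMixed_mem_perturbedLat_neg_iff hrT, Set.mem_ofPred_eq]
  simp only [reflectMixed, Matrix.cons_val]
  grind

/-- Rotates the segment `x + y = const`, `1 ≤ x ≤ M` through `(x, y, w)` cyclically by `e * (M / T)`
steps, where `M = x + y + w`. If `(c₀ - c₁)e ≡ 2 (mod r)`, this adds `2M / T` to `∑ cⱼaⱼ` modulo
`r`, which takes the points of the lattice of `c` to those of the lattice of `-c`. -/
def rotateMixed (T : ℕ) (e : ℤ) (a : Fin 3 → ℤ) : Fin 3 → ℤ :=
  let x := (a 0 - 1 + e * ((∑ j, a j) / T)) % (∑ j, a j) + 1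
  ![x, a 0 + a 1 - x, a 2]

theorem sum_rotateMixed (T : ℕ) (e : ℤ) (a : Fin 3 → ℤ) : ∑ j, rotateMixed T e a j = ∑ j, a j := by
  simp [rotateMixed, Fin.sum_univ_three]

theorem rotateMixed_neg_rotateMixed {a : Fin 3 → ℤ} (e : ℤ) (hpos : 0 < a 0)
    (hle : a 0 ≤ ∑ j, a j) :
    rotateMixed T (-e) (rotateMixed T e a) = a := by
  have hcancel : (rotateMixed T e a 0 - 1 + -e * ((∑ j, a j) / T)) % (∑ j, a j) + 1 = a 0 := by
    simp only [rotateMixed, Matrix.cons_val, add_sub_cancel_right]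
    rw [Int.emod_add_emod, neg_mul, add_neg_cancel_right, Int.emod_eq_of_lt (by grind) (by grind),
      sub_add_cancel]
  ext j
  rw [rotateMixed, sum_rotateMixed, hcancel]
  fin_cases j <;> simp [rotateMixed]

theorem rotateMixed_mem_perturbedLat_neg {c a : Fin 3 → ℤ} {e : ℤ} (hT : T ≠ 0) (hrT : r ∣ T)
    (he : (r : ℤ) ∣ (c 0 - c 1) * e - 2) (ha : a ∈ perturbedLat r T c) :
    rotateMixed T e a ∈ perturbedLat r T (-c) := by
  obtain ⟨h, hsum, l, hl⟩ := mem_perturbedLat_iff.1 ha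
  refine mem_perturbedLat_iff.2 ⟨h, by rw [sum_rotateMixed, hsum], ?_⟩
  obtain ⟨u, hu⟩ := he
  obtain ⟨v, hv⟩ : (r : ℤ) ∣ T := Int.natCast_dvd_natCast.2 hrT
  have hh : (∑ j, a j) / T = h := by
    rw [hsum, Int.mul_ediv_cancel_left _ (Nat.cast_ne_zero.2 hT)]
  have hdiv := Int.emod_add_mul_ediv (a 0 - 1 + e * h) (∑ j, a j)
  set q := (a 0 - 1 + e * h) / ∑ j, a j
  rw [Fin.sum_univ_three] at hl ⊢
  simp only [rotateMixed, hh, Pi.neg_apply, Matrix.cons_val]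
  exact ⟨-l - u * h + (c 0 - c 1) * v * h * q, by
    linear_combination -hl - h * hu - (c 0 - c 1) * (hdiv - q * hsum - q * h * hv)⟩

theorem rotateMixed_mem_orthantPoints_mixed_sdiff_lt {c a : Fin 3 → ℤ} {e : ℤ} (hT : T ≠ 0)
    (hrT : r ∣ T) (he : (r : ℤ) ∣ (c 0 - c 1) * e - 2)
    (ha : a ∈ orthantPoints (perturbedLat r T c) k ![1, 1, -1] \ {a | a 1 < -a 2}) :
    rotateMixed T e a ∈ orthantPoints (perturbedLat r T (-c)) k ![1, 1, -1] \ {a | a 1 < -a 2} := by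
  obtain ⟨ha, hge⟩ := ha
  rw [Set.mem_ofPred_eq, not_lt] at hge
  obtain ⟨hmem, hk, hx, -, hw⟩ := mem_orthantPoints_mixed_iff.1 ha
  have hM : 0 < ∑ j, a j := by grind [Fin.sum_univ_three]
  have hnonneg := Int.emod_nonneg (a 0 - 1 + e * ((∑ j, a j) / T)) hM.ne'
  have hlt := Int.emod_lt_of_pos (a 0 - 1 + e * ((∑ j, a j) / T)) hM
  rw [Set.mem_sdiff, mem_orthantPoints_mixed_iff, Set.mem_ofPred_eq]
  refine ⟨⟨rotateMixed_mem_perturbedLat_neg hT hrT he hmem, ?_⟩, ?_⟩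
  all_goals
    simp only [rotateMixed, Matrix.cons_val]
    grind [Fin.sum_univ_three]

theorem ncard_orthantPoints_perturbedLat_neg_mixed_sdiff_lt {c : Fin 3 → ℤ} (hT : T ≠ 0)
    (hrT : r ∣ T) (hc : (c 0 - c 1).gcd r ∣ 2) :
    (orthantPoints (perturbedLat r T (-c)) k ![1, 1, -1] \ {a | a 1 < -a 2}).ncard =
      (orthantPoints (perturbedLat r T c) k ![1, 1, -1] \ {a | a 1 < -a 2}).ncard := by
  obtain ⟨e, u, he⟩ := Int.gcd_dvd_iff.1 hc
  have he_dvd : (r : ℤ) ∣ (c 0 - c 1) * e - 2 := ⟨-u, by push_cast at he; linear_combination -he⟩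
  have he_dvd_neg : (r : ℤ) ∣ ((-c) 0 - (-c) 1) * -e - 2 := by
    rwa [Pi.neg_apply, Pi.neg_apply, mul_neg, ← neg_mul, neg_sub_neg, neg_sub]
  have hinv (c : Fin 3 → ℤ) (e : ℤ) : Set.LeftInvOn (rotateMixed T (-e)) (rotateMixed T e)
      (orthantPoints (perturbedLat r T c) k ![1, 1, -1] \ {a | a 1 < -a 2}) := by
    rintro a ⟨ha, hge⟩
    rw [Set.mem_ofPred_eq, not_lt] at hge
    obtain ⟨-, -, hx, -, -⟩ := mem_orthantPoints_mixed_iff.1 ha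
    exact rotateMixed_neg_rotateMixed e hx (by grind [Fin.sum_univ_three])
  refine (Set.BijOn.ncard_eq (f := rotateMixed T e) (Set.InvOn.bijOn (f' := rotateMixed T (-e))
    ⟨hinv c e, by simpa using hinv (-c) (-e)⟩ ?_ ?_)).symm
  · exact fun a ha => rotateMixed_mem_orthantPoints_mixed_sdiff_lt hT hrT he_dvd ha
  · exact fun a ha => by
      simpa using rotateMixed_mem_orthantPoints_mixed_sdiff_lt hT hrT he_dvd_neg ha

theorem ncard_orthantPoints_perturbedLat_neg_mixed {c : Fin 3 → ℤ} (hT : T ≠ 0) (hrT : r ∣ T)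
    (hc : (c 0 - c 1).gcd r ∣ 2) :
    (orthantPoints (perturbedLat r T (-c)) k ![1, 1, -1]).ncard =
      (orthantPoints (perturbedLat r T c) k ![1, 1, -1]).ncard := by
  rw [← Set.ncard_inter_add_ncard_sdiff_eq_ncard _ {a | a 1 < -a 2} (finite_orthantPoints _ _ _),
    ncard_orthantPoints_perturbedLat_neg_mixed_inter_lt c hrT,
    ncard_orthantPoints_perturbedLat_neg_mixed_sdiff_lt hT hrT hc,
    Set.ncard_inter_add_ncard_sdiff_eq_ncard _ _ (finite_orthantPoints _ _ _)]

theorem ncard_orthantPoints_perturbedLat_neg (hT : T ≠ 0) (hrT : r ∣ T)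
    {c : Fin 3 → ℤ} (hc : Pairwise fun i j => (c i - c j).gcd r ∣ 2) (σ : Fin 3 → SignType) :
    (orthantPoints (perturbedLat r T (-c)) k σ).ncard =
      (orthantPoints (perturbedLat r T c) k σ).ncard := by
  induction σ using signPattern_induction generalizing c with
  | perm τ σ ih =>
    rw [← ncard_orthantPoints_perturbedLat_comp_perm c σ τ,
      ← ncard_orthantPoints_perturbedLat_comp_perm (-c) σ τ]
    exact ih (hc.comp_of_injective τ.injective)
  | neg σ ih =>
    simpa only [ncard_orthantPoints_neg fun _ => neg_mem_perturbedLat_iff] using ih hc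
  | zero σ hσ => exact ncard_orthantPoints_perturbedLat_neg_of_apply_two_eq_zero c hrT hσ
  | pos => exact ncard_orthantPoints_perturbedLat_neg_one hT hrT hc
  | mixed => exact ncard_orthantPoints_perturbedLat_neg_mixed hT hrT (hc (by decide))

end PerturbedLattice

theorem pairwise_zero_one_three_gcd_sub_dvd_two {r : ℕ} (h3 : ¬ 3 ∣ r) :
    Pairwise fun i j => ((![0, 1, 3] : Fin 3 → ℤ) i - ![0, 1, 3] j).gcd r ∣ 2 := by
  have hcoprime : Nat.gcd 3 r = 1 := Nat.prime_three.coprime_iff_not_dvd.2 h3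
  intro i j hij
  fin_cases i <;> fin_cases j <;> simp_all [Int.gcd_def, Nat.gcd_dvd_left]

theorem congLat_one_norm_star_isospectral_general (r t : ℕ) (c : Fin 3 → ℤ)
    (hc : Pairwise fun i j => (c i - c j).gcd r ∣ 2) (k z : ℕ) :
    NL (r ^ 2 * t) 3 (fun j => 1 + c j * (r * t)) k z =
      NL (r ^ 2 * t) 3 (fun j => 1 - c j * (r * t)) k z := by
  obtain hT | hT := eq_or_ne (r * t) 0
  · simp only [show (r * t : ℤ) = 0 from mod_cast hT, mul_zero, add_zero, sub_zero]
  rw [NL_eq_sum_ncard_orthantPoints, NL_eq_sum_ncard_orthantPoints]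
  refine sum_congr rfl fun σ _ => ?_
  have h := ncard_orthantPoints_perturbedLat_neg (k := k) hT (dvd_mul_right r t) hc σ
  simpa [perturbedLat, sq, mul_assoc, sub_eq_add_neg] using h.symm

/-- For `r` not divisible by `3`, the congruence lattices `𝓛(r²t; 1, 1+rt, 1+3rt)` and
`𝓛(r²t; 1, 1-rt, 1-3rt)` are `‖·‖₁*`-isospectral. -/
theorem congLat_one_norm_star_isospectral (r t : ℕ) (hr : 1 ≤ r) (ht : 1 ≤ t)
    (h3 : ¬ (3 ∣ r)) (k z : ℕ) (hz : z ≤ 3) :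
    NL (r ^ 2 * t) 3 ![(1 : ℤ), 1 + (r : ℤ) * t, 1 + 3 * (r : ℤ) * t] k z =
      NL (r ^ 2 * t) 3 ![(1 : ℤ), 1 - (r : ℤ) * t, 1 - 3 * (r : ℤ) * t] k z := by
  convert congLat_one_norm_star_isospectral_general r t ![0, 1, 3]
    (pairwise_zero_one_three_gcd_sub_dvd_two h3) k z using 2 <;>
  · ext j
    fin_cases j <;> simp [mul_assoc]
end

section
/- Let r and t be positive integers with r not divisible by 3, and let 𝓛 = 𝓛(r²t; 1, 1+rt, 1+3rt) and 𝓛' = 𝓛(r²t; 1, 1−rt, 1−3rt). Then for every k ∈ ℕ and every sign pattern (δ₁, δ₂, δ₃) ∈ {−1, +1}³, the number of (a₁,a₂,a₃) ∈ 𝓛 with δᵢ aᵢ > 0 for i = 1,2,3 and |a₁| + |a₂| + |a₃| = k equals the number of (a₁,a₂,a₃) ∈ 𝓛' with δᵢ aᵢ > 0 for i = 1,2,3 and |a₁| + |a₂| + |a₃| = k. -/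
/-!
Put `S = ∑ aᵢ` and `X = ∑ wᵢaᵢ`. For `r ∣ N`, the lattice condition `N r ∣ S + N X` means that
`S = N m` with `r ∣ m + X`, so negating `w` amounts to negating `m` modulo `r`. Up to a permutation
of the coordinates and a global sign, an octant is either definite or has one minority sign.

* In the definite octant `S = k`, and the points form a triangle of pairs `(b, c)` on which `X` is
  `u b + v c` modulo `r`. The step `(b, c) ↦ (b - 1, c + 1)` matches residue `j` with residue
  `j + v - u` up to two edges, which contain equally many points of each residue because `u` and `v`
  are units. Hence the count plus the edge count is `(v - u)`-periodic, and `v - u ∣ 2` makes it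
  agree at `m` and `-m`.
* If `p` is the absolute value of the minority coordinate and `q` that of one of the others, then
  `S = k - 2 p`. The points with `q < p` are matched by `p ↦ k - p`, which negates `S`. The row
  `p ≤ q < k - p` has length `S`, a multiple of `r`, so translating `q` leaves its residue counts
  unchanged; a suitable translation exchanges `m` and `-m`.
-/

open Finset

section ResidueCounts

variable {r n : ℕ} [NeZero r]

theorem card_filter_Ico_natCast (hn : r ∣ n) (a : ℕ) (P : ZMod r → Prop) [DecidablePred P] :
    #{q ∈ Ico a (a + n) | P ((q : ℕ) : ZMod r)} = n / r * #{x : ZMod r | P x} := by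
  have card_fiber (x : ZMod r) : #{q ∈ Ico a (a + n) | ((q : ℕ) : ZMod r) = x} = n / r := by
    obtain ⟨v, rfl⟩ := ZMod.natCast_zmod_surjective x
    have periodic : Function.Periodic (fun q : ℕ => (q : ZMod r) = v) n := by
      simp [Function.Periodic, (ZMod.natCast_eq_zero_iff n r).2 hn]
    rw [Nat.filter_Ico_card_eq_of_periodic a n _ periodic]
    simp only [ZMod.natCast_eq_natCast_iff]
    simp [Nat.count_modEq_card n (NeZero.pos r), Nat.mod_eq_zero_of_dvd hn]
  rw [card_eq_sum_card_fiberwise (f := fun q : ℕ => (q : ZMod r)) (t := {x | P x})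
    fun q hq => by simpa using (mem_filter.1 hq).2, mul_comm, ← smul_eq_mul, ← sum_const]
  refine sum_congr rfl fun x hx => ?_
  rw [← card_fiber x, filter_filter]
  congr! 2
  grind

theorem card_filter_Ico_natCast_add (hn : r ∣ n) (a : ℕ) (y : ZMod r) (P : ZMod r → Prop)
    [DecidablePred P] :
    #{q ∈ Ico a (a + n) | P (((q : ℕ) : ZMod r) + y)} =
      #{q ∈ Ico a (a + n) | P ((q : ℕ) : ZMod r)} := by
  have card_translate : #{x : ZMod r | P (x + y)} = #{x : ZMod r | P x} :=
    card_equiv (Equiv.addRight y) (by simp)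
  rw [card_filter_Ico_natCast hn a (fun x => P (x + y)), card_translate,
    card_filter_Ico_natCast hn a P]

theorem card_filter_Ico_one_mul_natCast (hn : r ∣ n) {u : ZMod r} (hu : IsUnit u) (j : ZMod r) :
    #{q ∈ Ico 1 n | u * ((q : ℕ) : ZMod r) = j} = #{q ∈ Ico 1 n | ((q : ℕ) : ZMod r) = j} := by
  obtain rfl | hpos := Nat.eq_zero_or_pos n
  · simp
  have card_dilate : #{x : ZMod r | u * x = j} = #{x : ZMod r | x = j} :=
    card_equiv hu.unit.mulLeft (by simp)
  have full : #{q ∈ Ico 0 (0 + n) | u * ((q : ℕ) : ZMod r) = j} =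
      #{q ∈ Ico 0 (0 + n) | ((q : ℕ) : ZMod r) = j} := by
    rw [card_filter_Ico_natCast hn 0 (fun x => u * x = j), card_dilate,
      card_filter_Ico_natCast hn 0 (· = j)]
  rw [zero_add, ← insert_Ico_add_one_left_eq_Ico hpos, filter_insert, filter_insert] at full
  rcases eq_or_ne 0 j with rfl | hj <;> simpa [*] using full

theorem card_filter_Ico_one_natCast_eq_neg (hn : r ∣ n) (j : ZMod r) :
    #{q ∈ Ico 1 n | ((q : ℕ) : ZMod r) = -j} = #{q ∈ Ico 1 n | ((q : ℕ) : ZMod r) = j} := by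
  rw [← card_filter_Ico_one_mul_natCast hn isUnit_one.neg j]
  simp [neg_eq_iff_eq_neg]

end ResidueCounts

/-- The open lattice triangle of pairs of positive integers with sum less than `k`. It parametrizes
the compositions of `k` into three positive parts; the omitted part is `k - x.1 - x.2`. -/
def openTriangle (k : ℕ) : Finset (ℕ × ℕ) :=
  {x ∈ Ico 1 k ×ˢ Ico 1 k | x.1 + x.2 < k}

theorem mem_openTriangle {k : ℕ} {x : ℕ × ℕ} :
    x ∈ openTriangle k ↔ 0 < x.1 ∧ 0 < x.2 ∧ x.1 + x.2 < k := by
  simp only [openTriangle, mem_filter, mem_product, mem_Ico]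
  lia

theorem card_filter_openTriangle_and_le (k : ℕ) (f : ℕ × ℕ → Prop) [DecidablePred f] :
    #{x ∈ openTriangle k | f x ∧ x.1 ≤ x.2} =
      ∑ p ∈ Ico 1 k, #{q ∈ Ico p (k - p) | f (p, q)} := by
  rw [← card_sigma]
  refine card_bij' (fun x _ => ⟨x.1, x.2⟩) (fun y _ => (y.1, y.2)) ?_ ?_ ?_ ?_ <;>
    grind [mem_openTriangle]

section Triangle

variable {k : ℕ} {f g : ℕ × ℕ → Prop} [DecidablePred f] [DecidablePred g]

theorem card_filter_openTriangle_and_not_le_congr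
    (h : ∀ p p' q, p + p' = k → q < p → q < p' → (f (p, q) ↔ g (p', q))) :
    #{x ∈ openTriangle k | f x ∧ ¬ x.1 ≤ x.2} = #{x ∈ openTriangle k | g x ∧ ¬ x.1 ≤ x.2} := by
  refine card_bij' (fun x _ => (k - x.1, x.2)) (fun x _ => (k - x.1, x.2)) ?_ ?_ ?_ ?_ <;>
    grind [mem_openTriangle]

theorem card_filter_openTriangle_congr_of_reflect
    (hlower : ∀ p p' q, p + p' = k → q < p → q < p' → (f (p, q) ↔ g (p', q)))
    (hupper : ∀ p, 2 * p ≤ k →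
      #{q ∈ Ico p (k - p) | f (p, q)} = #{q ∈ Ico p (k - p) | g (p, q)}) :
    #{x ∈ openTriangle k | f x} = #{x ∈ openTriangle k | g x} := by
  rw [← card_filter_add_card_filter_not (s := {x ∈ openTriangle k | f x}) (fun x => x.1 ≤ x.2),
    ← card_filter_add_card_filter_not (s := {x ∈ openTriangle k | g x}) (fun x => x.1 ≤ x.2)]
  simp only [filter_filter]
  rw [card_filter_openTriangle_and_not_le_congr hlower, card_filter_openTriangle_and_le,
    card_filter_openTriangle_and_le]
  congr 1
  refine sum_congr rfl fun p _ => ?_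
  rcases le_or_gt (2 * p) k with hp | hp
  · exact hupper p hp
  · simp [Ico_eq_empty_of_le (show k - p ≤ p by lia)]

theorem card_filter_openTriangle_add_card_edge (h : ∀ b c, f (b + 1, c) ↔ g (b, c + 1)) :
    #{x ∈ openTriangle k | f x} + #{b ∈ Ico 1 k | f (b, 0)} =
      #{x ∈ openTriangle k | g x} + #{c ∈ Ico 1 k | g (0, c)} := by
  have hf : #{x ∈ range k ×ˢ range k | 0 < x.1 ∧ x.1 + x.2 < k ∧ f x} =
      #{x ∈ openTriangle k | f x} + #{b ∈ Ico 1 k | f (b, 0)} := by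
    rw [← card_filter_add_card_filter_not (fun x => 0 < x.2)]
    congr 1
    · refine congrArg card (Finset.ext fun x => ?_)
      simp only [mem_filter, mem_product, mem_range, mem_openTriangle]
      grind
    · refine card_bij' (fun x _ => x.1) (fun b _ => (b, 0)) ?_ ?_ ?_ ?_ <;> grind
  have hg : #{x ∈ range k ×ˢ range k | 0 < x.2 ∧ x.1 + x.2 < k ∧ g x} =
      #{x ∈ openTriangle k | g x} + #{c ∈ Ico 1 k | g (0, c)} := by
    rw [← card_filter_add_card_filter_not (fun x => 0 < x.1)]
    congr 1
    · refine congrArg card (Finset.ext fun x => ?_)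
      simp only [mem_filter, mem_product, mem_range, mem_openTriangle]
      grind
    · refine card_bij' (fun x _ => x.2) (fun c _ => (0, c)) ?_ ?_ ?_ ?_ <;> grind
  rw [← hf, ← hg]
  refine card_bij' (fun x _ => (x.1 - 1, x.2 + 1)) (fun x _ => (x.1 + 1, x.2 - 1)) ?_ ?_ ?_ ?_ <;>
    grind

end Triangle

theorem card_filter_openTriangle_eq_neg {r k : ℕ} [NeZero r] (hk : r ∣ k) {u v : ZMod r}
    (hu : IsUnit u) (hv : IsUnit v) (huv : v - u ∣ 2) (j : ZMod r) :
    #{x ∈ openTriangle k | u * x.1 + v * x.2 = -j} =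
      #{x ∈ openTriangle k | u * x.1 + v * x.2 = j} := by
  let G (j : ZMod r) : ℕ :=
    #{x ∈ openTriangle k | u * x.1 + v * x.2 = j} + #{q ∈ Ico 1 k | ((q : ℕ) : ZMod r) = j}
  have periodic : Function.Periodic G (v - u) := by
    intro i
    have shift := card_filter_openTriangle_add_card_edge (k := k)
      (f := fun x => u * x.1 + v * x.2 = i)
      (g := fun x => u * x.1 + v * x.2 = i + (v - u))
      fun b c => by push_cast; grind
    simp only [Nat.cast_zero, mul_zero, add_zero, zero_add,
      card_filter_Ico_one_mul_natCast hk hu, card_filter_Ico_one_mul_natCast hk hv] at shift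
    exact shift.symm
  obtain ⟨y, hy⟩ := huv
  obtain ⟨z, hz⟩ := ZMod.intCast_surjective (y * j)
  have hGj : G (-j) = G j := by
    rw [← periodic.int_mul z (-j), hz]
    congr 1
    linear_combination -j * hy
  simpa only [G, card_filter_Ico_one_natCast_eq_neg hk, add_left_inj] using hGj

theorem natCast_mul_dvd_mul_add_mul_iff {r N : ℕ} (hN : N ≠ 0) (m x : ℤ) :
    ((N * r : ℕ) : ℤ) ∣ N * m + N * x ↔ ((m + x : ℤ) : ZMod r) = 0 := by
  rw [ZMod.intCast_zmod_eq_zero_iff_dvd, ← mul_add, Nat.cast_mul,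
    mul_dvd_mul_iff_left (Nat.cast_ne_zero.2 hN)]

theorem natCast_dvd_of_natCast_mul_dvd_add_mul {r N : ℕ} {S x : ℤ}
    (h : ((N * r : ℕ) : ℤ) ∣ S + N * x) : (N : ℤ) ∣ S := by
  rw [Nat.cast_mul] at h
  exact (dvd_add_left (dvd_mul_right _ _)).1 (dvd_of_mul_right_dvd h)

/-- The number of points of one-norm `k` of the congruence lattice `congLat q m s` in the open
octant with sign pattern `δ`, where `δ` is meant to take values in `{1, -1}`. -/
noncomputable def octantCount {m : ℕ} (q : ℕ) (s δ : Fin m → ℤ) (k : ℕ) : ℕ :=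
  Nat.card {a : Fin m → ℤ // a ∈ congLat q m s ∧ (∀ i, 0 < δ i * a i) ∧ (∑ i, (a i).natAbs) = k}

section OctantCount

variable {m : ℕ} (q : ℕ) (s δ : Fin m → ℤ) (k : ℕ)

theorem octantCount_comp_perm (σ : Equiv.Perm (Fin m)) :
    octantCount q (s ∘ σ) (δ ∘ σ) k = octantCount q s δ k := by
  refine Nat.card_congr (Equiv.subtypeEquiv (σ.arrowCongr (Equiv.refl ℤ)) fun a => ?_)
  simp only [congLat, Set.mem_ofPred_eq, Equiv.arrowCongr_apply, Equiv.coe_refl,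
    Function.comp_apply, id_eq]
  rw [← Equiv.sum_comp σ (fun i => a (σ.symm i) * s i),
    ← Equiv.sum_comp σ (fun i => (a (σ.symm i)).natAbs),
    ← σ.forall_congr_right (q := fun i => 0 < δ i * a (σ.symm i))]
  simp only [Equiv.symm_apply_apply]

theorem octantCount_neg : octantCount q s (-δ) k = octantCount q s δ k :=
  Nat.card_congr (Equiv.subtypeEquiv (Equiv.neg _) fun a => by simp [congLat])

theorem octantCount_eq_card_natAbs {δ : Fin m → ℤ} (hδ : ∀ i, δ i = 1 ∨ δ i = -1) :
    octantCount q s δ k = Nat.card {y : Fin m → ℕ //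
      (q : ℤ) ∣ ∑ i, δ i * y i * s i ∧ (∀ i, 0 < y i) ∧ ∑ i, y i = k} := by
  have sign_mul_natAbs {i : Fin m} {a : ℤ} (ha : 0 < δ i * a) : δ i * a.natAbs = a := by
    rcases hδ i with h | h <;> rw [h] at ha ⊢ <;> lia
  have natAbs_sign_mul (i : Fin m) (n : ℕ) : (δ i * n).natAbs = n := by
    rcases hδ i with h | h <;> simp [h]
  have sign_mul_sign_mul (i : Fin m) (n : ℤ) : δ i * (δ i * n) = n := by
    rcases hδ i with h | h <;> simp [h]
  refine Nat.card_congr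
    { toFun a := ⟨fun i => (a.1 i).natAbs, ?_, fun i => ?_, a.2.2.2⟩
      invFun y := ⟨fun i => δ i * y.1 i, y.2.1, fun i => ?_, ?_⟩
      left_inv a := Subtype.ext (funext fun i => sign_mul_natAbs (a.2.2.1 i))
      right_inv y := Subtype.ext (funext fun i => natAbs_sign_mul i (y.1 i)) }
  · simpa only [sign_mul_natAbs (a.2.2.1 _)] using! a.2.1
  · exact Int.natAbs_pos.2 (right_ne_zero_of_mul (a.2.2.1 i).ne')
  · simpa only [sign_mul_sign_mul, Nat.cast_pos] using y.2.2.1 i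
  · simpa only [natAbs_sign_mul] using y.2.2.2

theorem octantCount_three {δ : Fin 3 → ℤ} (hδ : ∀ i, δ i = 1 ∨ δ i = -1) (s : Fin 3 → ℤ) :
    octantCount q s δ k = #{x ∈ openTriangle k |
      (q : ℤ) ∣ δ 0 * (k - x.1 - x.2) * s 0 + δ 1 * x.1 * s 1 + δ 2 * x.2 * s 2} := by
  rw [octantCount_eq_card_natAbs q s k hδ, ← card_image_of_injOn
    (f := fun x : ℕ × ℕ => ![k - x.1 - x.2, x.1, x.2]) fun x _ y _ h => by
      simp only [Matrix.vecCons_inj] at h; exact Prod.ext h.2.1 h.2.2.1]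
  refine Nat.subtype_card _ fun y => ?_
  simp only [mem_image, mem_filter, mem_openTriangle, Fin.sum_univ_three]
  constructor
  · rintro ⟨⟨b, c⟩, ⟨⟨hb, hc, hbc⟩, hdvd⟩, rfl⟩
    have cast_fst : ((k - b - c : ℕ) : ℤ) = k - b - c := by lia
    refine ⟨by simpa [cast_fst] using hdvd, fun i => ?_, by simp; lia⟩
    fin_cases i
    exacts [show 0 < k - b - c by lia, hb, hc]
  · rintro ⟨hdvd, hpos, rfl⟩
    have cast_fst : ((y 0 + y 1 + y 2 : ℕ) : ℤ) - y 1 - y 2 = y 0 := by lia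
    refine ⟨(y 1, y 2), ⟨⟨hpos 1, hpos 2, by grind⟩, by rwa [cast_fst]⟩, ?_⟩
    ext i
    fin_cases i
    exacts [show y 0 + y 1 + y 2 - y 1 - y 2 = y 0 by lia, rfl, rfl]

end OctantCount

section AffineWeights

variable {r N k : ℕ} {w : Fin 3 → ℤ}

theorem octantCount_one_mul (hrN : r ∣ N) (hN : N ≠ 0) (w : Fin 3 → ℤ) (m : ℕ) :
    octantCount (N * r) (1 + (N : ℤ) • w) 1 (N * m) = #{x ∈ openTriangle (N * m) |
      ((w 1 - w 0 : ℤ) : ZMod r) * x.1 + ((w 2 - w 0 : ℤ) : ZMod r) * x.2 = -m} := by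
  rw [octantCount_three _ _ (by simp)]
  congr! 2 with x
  have cast_N : ((N : ℤ) : ZMod r) = 0 := by simpa [ZMod.natCast_eq_zero_iff] using hrN
  trans ((m + (w 0 * (N * m - x.1 - x.2) + w 1 * x.1 + w 2 * x.2) : ℤ) : ZMod r) = 0
  · rw [← natCast_mul_dvd_mul_add_mul_iff hN]
    simp only [Pi.one_apply, Pi.add_apply, Pi.smul_apply, smul_eq_mul, Nat.cast_mul]
    ring_nf
  · push_cast at cast_N ⊢
    grind

theorem octantCount_one_eq_zero (hNk : ¬ N ∣ k) :
    octantCount (N * r) (1 + (N : ℤ) • w) 1 k = 0 := by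
  rw [octantCount_three _ _ (by simp), card_eq_zero, filter_eq_empty_iff]
  intro x _ h
  refine hNk (Int.natCast_dvd_natCast.1 (natCast_dvd_of_natCast_mul_dvd_add_mul (r := r)
    (x := w 0 * (k - x.1 - x.2) + w 1 * x.1 + w 2 * x.2) ?_))
  convert h using 1
  simp only [Pi.one_apply, Pi.add_apply, Pi.smul_apply, smul_eq_mul]
  ring

theorem octantCount_one_eq_neg (hrN : r ∣ N) (hN : N ≠ 0)
    (h₁ : IsUnit ((w 1 - w 0 : ℤ) : ZMod r)) (h₂ : IsUnit ((w 2 - w 0 : ℤ) : ZMod r))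
    (h₁₂ : ((w 2 - w 1 : ℤ) : ZMod r) ∣ 2) :
    octantCount (N * r) (1 + (N : ℤ) • w) 1 k = octantCount (N * r) (1 + (N : ℤ) • -w) 1 k := by
  have : NeZero r := ⟨ne_zero_of_dvd_ne_zero hN hrN⟩
  obtain ⟨m, rfl⟩ | hNk := em (N ∣ k)
  · rw [octantCount_one_mul hrN hN, octantCount_one_mul hrN hN,
      card_filter_openTriangle_eq_neg (hrN.mul_right m) h₁ h₂ (by simpa using h₁₂)]
    congr! 2 with x
    push_cast [Pi.neg_apply]
    grind
  · rw [octantCount_one_eq_zero hNk, octantCount_one_eq_zero hNk]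

/-- The value `∑ aᵢ + N * ∑ wᵢaᵢ` of the affine form defining the lattice, at the point
`a = (k - p - q, -p, q)` of one-norm `k` in the octant with signs `(1, -1, 1)`. -/
def mixedForm (N : ℕ) (w : Fin 3 → ℤ) (k p q : ℕ) : ℤ :=
  (k - 2 * p) + N * (w 0 * (k - p - q) - w 1 * p + w 2 * q)

theorem octantCount_mixed (n N : ℕ) (w : Fin 3 → ℤ) (k : ℕ) :
    octantCount n (1 + (N : ℤ) • w) ![1, -1, 1] k =
      #{x ∈ openTriangle k | (n : ℤ) ∣ mixedForm N w k x.1 x.2} := by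
  rw [octantCount_three _ _ (by simp [Fin.forall_fin_succ])]
  congr! 3 with x
  simp only [mixedForm, Pi.add_apply, Pi.one_apply, Pi.smul_apply, smul_eq_mul, Matrix.cons_val]
  ring

theorem dvd_mixedForm_reflect (hrN : r ∣ N) (w : Fin 3 → ℤ) {p p' q : ℕ} (hp : p + p' = k)
    (h : ((N * r : ℕ) : ℤ) ∣ mixedForm N w k p q) :
    ((N * r : ℕ) : ℤ) ∣ mixedForm N (-w) k p' q := by
  have form_reflect :
      mixedForm N (-w) k p' q = N * ((w 0 + w 1) * (k - 2 * p)) - mixedForm N w k p q := by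
    subst hp
    simp only [mixedForm, Pi.neg_apply, Nat.cast_add]
    ring
  rw [form_reflect]
  refine dvd_sub ?_ h
  have r_dvd := (Int.natCast_dvd_natCast.2 hrN).trans (natCast_dvd_of_natCast_mul_dvd_add_mul h)
  push_cast
  exact mul_dvd_mul_left _ (r_dvd.mul_left _)

theorem dvd_mixedForm_iff (hrN : r ∣ N) (hN : N ≠ 0) (w : Fin 3 → ℤ) (m p q : ℕ) :
    ((N * r : ℕ) : ℤ) ∣ mixedForm N w (2 * p + N * m) p q ↔
      ((w 2 - w 0 : ℤ) : ZMod r) * q = -m - ((w 0 - w 1 : ℤ) : ZMod r) * p := by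
  have cast_N : ((N : ℤ) : ZMod r) = 0 := by simpa [ZMod.natCast_eq_zero_iff] using hrN
  have minority_sub : ((2 * p + N * m : ℕ) : ℤ) - 2 * p = N * m := by push_cast; ring
  rw [mixedForm, minority_sub, natCast_mul_dvd_mul_add_mul_iff hN]
  push_cast at cast_N ⊢
  grind

theorem dvd_of_dvd_mixedForm {n p q : ℕ}
    (h : ((N * r : ℕ) : ℤ) ∣ mixedForm N w (2 * p + n) p q) : N ∣ n := by
  simpa [Int.natCast_dvd_natCast] using natCast_dvd_of_natCast_mul_dvd_add_mul h

theorem card_filter_Ico_mixedForm (hrN : r ∣ N) (hN : N ≠ 0)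
    (hw : ((w 2 - w 0 : ℤ) : ZMod r) ∣ 2) {p : ℕ} (hp : 2 * p ≤ k) :
    #{q ∈ Ico p (k - p) | ((N * r : ℕ) : ℤ) ∣ mixedForm N w k p q} =
      #{q ∈ Ico p (k - p) | ((N * r : ℕ) : ℤ) ∣ mixedForm N (-w) k p q} := by
  have : NeZero r := ⟨ne_zero_of_dvd_ne_zero hN hrN⟩
  obtain ⟨n, rfl⟩ := Nat.exists_eq_add_of_le hp
  obtain ⟨m, rfl⟩ | hNn := em (N ∣ n)
  · obtain ⟨y, hy⟩ := hw
    simp only [dvd_mixedForm_iff hrN hN]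
    rw [show 2 * p + N * m - p = p + N * m by lia,
      ← card_filter_Ico_natCast_add (hrN.mul_right m) p (y * m) fun x =>
        (((-w) 2 - (-w) 0 : ℤ) : ZMod r) * x = -m - (((-w) 0 - (-w) 1 : ℤ) : ZMod r) * p]
    congr! 2 with q
    have translate : ((w 2 - w 0 : ℤ) : ZMod r) * (q + y * m) =
        ((w 2 - w 0 : ℤ) : ZMod r) * q + 2 * m := by
      linear_combination (-m : ZMod r) * hy
    push_cast [Pi.neg_apply] at translate ⊢
    grind
  · simp only [mt dvd_of_dvd_mixedForm hNn]

theorem octantCount_mixed_eq_neg (hrN : r ∣ N) (hN : N ≠ 0)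
    (hw : ((w 2 - w 0 : ℤ) : ZMod r) ∣ 2) :
    octantCount (N * r) (1 + (N : ℤ) • w) ![1, -1, 1] k =
      octantCount (N * r) (1 + (N : ℤ) • -w) ![1, -1, 1] k := by
  simp only [octantCount_mixed]
  exact card_filter_openTriangle_congr_of_reflect
    (fun p p' q hp _ _ => ⟨dvd_mixedForm_reflect hrN w hp, fun h => by
      simpa using dvd_mixedForm_reflect hrN (-w) ((add_comm p' p).trans hp) h⟩)
    fun p hp => card_filter_Ico_mixedForm hrN hN hw hp

theorem eq_one_or_neg_one_or_exists_perm_comp_eq {δ : Fin 3 → ℤ} (hδ : ∀ i, δ i = 1 ∨ δ i = -1) :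
    δ = 1 ∨ δ = -1 ∨
      ∃ σ : Equiv.Perm (Fin 3), δ ∘ σ = ![1, -1, 1] ∨ δ ∘ σ = -![1, -1, 1] := by
  choose ε hε using fun i => Int.isUnit_iff.2 (hδ i)
  obtain rfl : (fun i => (ε i : ℤ)) = δ := funext hε
  clear hε hδ
  revert ε
  decide

theorem sub_dvd_two_of_ne (h₁ : ((w 1 - w 0 : ℤ) : ZMod r) ∣ 2)
    (h₂ : ((w 2 - w 0 : ℤ) : ZMod r) ∣ 2) (h₁₂ : ((w 2 - w 1 : ℤ) : ZMod r) ∣ 2)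
    {i j : Fin 3} (hij : i ≠ j) : ((w i - w j : ℤ) : ZMod r) ∣ 2 := by
  have swap {i j : Fin 3} (h : ((w i - w j : ℤ) : ZMod r) ∣ 2) :
      ((w j - w i : ℤ) : ZMod r) ∣ 2 := by
    rwa [← neg_sub, Int.cast_neg, neg_dvd]
  fin_cases i <;> fin_cases j
  exacts [absurd rfl hij, swap h₁, swap h₂, h₁, absurd rfl hij, swap h₁₂, h₂, h₁₂, absurd rfl hij]

theorem congLat_octant_counts_eq_general (hrN : r ∣ N)
    (h₁ : IsUnit ((w 1 - w 0 : ℤ) : ZMod r)) (h₂ : IsUnit ((w 2 - w 0 : ℤ) : ZMod r))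
    (h₁₂ : ((w 2 - w 1 : ℤ) : ZMod r) ∣ 2) {δ : Fin 3 → ℤ} (hδ : ∀ i, δ i = 1 ∨ δ i = -1) :
    octantCount (N * r) (1 + (N : ℤ) • w) δ k = octantCount (N * r) (1 - (N : ℤ) • w) δ k := by
  obtain rfl | hN := eq_or_ne N 0
  · simp
  rw [sub_eq_add_neg, ← smul_neg]
  obtain rfl | rfl | ⟨σ, hσ⟩ := eq_one_or_neg_one_or_exists_perm_comp_eq hδ
  · exact octantCount_one_eq_neg hrN hN h₁ h₂ h₁₂
  · simpa only [octantCount_neg] using octantCount_one_eq_neg hrN hN h₁ h₂ h₁₂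
  · have hmixed := octantCount_mixed_eq_neg (k := k) (w := w ∘ σ) hrN hN
      (sub_dvd_two_of_ne h₁.dvd h₂.dvd h₁₂ (σ.injective.ne (by decide)))
    rw [← octantCount_comp_perm _ _ _ _ σ, ← octantCount_comp_perm _ (1 + (N : ℤ) • -w) _ _ σ]
    obtain hσ | hσ := hσ <;> rw [hσ]
    · exact hmixed
    · rw [octantCount_neg, octantCount_neg]
      exact hmixed

end AffineWeights

/-- For `r` not divisible by `3`, the lattices `𝓛(r²t; 1, 1+rt, 1+3rt)` and
`𝓛(r²t; 1, 1-rt, 1-3rt)` contain the same number of points of one-norm `k` in each open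
octant prescribed by a sign pattern `δ ∈ {±1}³`. -/
theorem congLat_octant_counts_eq (r t : ℕ) (hr : 1 ≤ r) (ht : 1 ≤ t)
    (h3 : ¬ (3 ∣ r)) (k : ℕ) (δ : Fin 3 → ℤ) (hδ : ∀ i, δ i = 1 ∨ δ i = -1) :
    Nat.card {a : Fin 3 → ℤ //
        a ∈ congLat (r ^ 2 * t) 3 ![(1 : ℤ), 1 + (r : ℤ) * t, 1 + 3 * (r : ℤ) * t] ∧
        (∀ i, 0 < δ i * a i) ∧ (∑ i, (a i).natAbs) = k} =
    Nat.card {a : Fin 3 → ℤ //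
        a ∈ congLat (r ^ 2 * t) 3 ![(1 : ℤ), 1 - (r : ℤ) * t, 1 - 3 * (r : ℤ) * t] ∧
        (∀ i, 0 < δ i * a i) ∧ (∑ i, (a i).natAbs) = k} := by
  have general := congLat_octant_counts_eq_general (k := k) (w := ![0, 1, 3]) (dvd_mul_right r t)
    (by simp) (by simpa using (ZMod.isUnit_prime_iff_not_dvd Nat.prime_three).2 h3) (by simp) hδ
  have plus : 1 + ((r * t : ℕ) : ℤ) • ![0, 1, 3] = ![(1 : ℤ), 1 + r * t, 1 + 3 * r * t] := by
    ext i
    fin_cases i <;> simp [mul_assoc, mul_comm, mul_left_comm]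
  have minus : 1 - ((r * t : ℕ) : ℤ) • ![0, 1, 3] = ![(1 : ℤ), 1 - r * t, 1 - 3 * r * t] := by
    ext i
    fin_cases i <;> simp [mul_assoc, mul_comm, mul_left_comm]
  rwa [plus, minus, show r * t * r = r ^ 2 * t by ring] at general
end
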